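/- Giambelli formula for generalized Schur polynomials: for every partition λ with at most n parts, letting r = #{i : λ_i ≥ i} be the number of diagonal boxes of λ and λ′ the conjugate partition, one has S_λ(x_1,…,x_n|a,b) = det( S_{(λ_i − i | λ′_j − j)} )_{1 ≤ i,j ≤ r}. -/

import Mathlib

open Polynomial Matrix Finset

noncomputable section

variable {K L : Type*} [Field K] [Field L]

/-- The orthogonal-polynomial sequence: `φ₀ = 1`, `φ₁ = z - a 0`,
`φ_{i+1} = (z - a i)·φ_i - b i·φ_{i-1}` (so `φ_{-1} = 0`). -/
def phi (a b : ℤ → K) : ℕ → Polynomial K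
  | 0 => 1
  | 1 => Polynomial.X - Polynomial.C (a 0)
  | (i+2) => (Polynomial.X - Polynomial.C (a (i+1))) * phi a b (i+1)
      - Polynomial.C (b (i+1)) * phi a b i

/-- `φ` with integer index, `0` for negative index. -/
def phiZ (a b : ℤ → K) (m : ℤ) : Polynomial K :=
  if m < 0 then 0 else phi a b m.toNat

/-- Generalized Schur polynomial `S_λ(y₁,…,y_m|a,b)
  = det(φ_{λ_j+m-j}(y_i)) / ∏_{i<j}(y_i - y_j)` (indices here 0-based). -/
def genS (a b : ℤ → K) (c : K →+* L) {m : ℕ} (y : Fin m → L) (lam : Fin m → ℕ) : L :=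
  Matrix.det (Matrix.of fun i j : Fin m =>
      (phi a b (lam j + (m - 1 - (j : ℕ)))).eval₂ c (y i)) /
    ∏ i : Fin m, ∏ j ∈ Finset.Ioi i, (y i - y j)

/-- `h_i = S_{(i)}` for `i ≥ 0`, and `h_i = 0` for `i < 0`. -/
def genh (a b : ℤ → K) (c : K →+* L) {m : ℕ} (y : Fin m → L) (i : ℤ) : L :=
  if i < 0 then 0 else genS a b c y (fun j => if (j : ℕ) = 0 then i.toNat else 0)

/-- `h_i^{(0)} = h_i`, `h_i^{(r+1)} = h_{i+1}^{(r)} + a(i+m-1)h_i^{(r)} + b(i+m-1)h_{i-1}^{(r)}`. -/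
def genhr (a b : ℤ → K) (c : K →+* L) {m : ℕ} (y : Fin m → L) : ℕ → ℤ → L
  | 0, i => genh a b c y i
  | (r+1), i => genhr a b c y r (i+1) + c (a (i + m - 1)) * genhr a b c y r i
      + c (b (i + m - 1)) * genhr a b c y r (i-1)

/-- The field `F = K(x₁,…,x_n)`. -/
abbrev Fn (K : Type*) [Field K] (n : ℕ) := FractionRing (MvPolynomial (Fin n) K)

/-- The embedding `K → K(x₁,…,x_n)`. -/
def cK (K : Type*) [Field K] (n : ℕ) : K →+* Fn K n :=
  (algebraMap (MvPolynomial (Fin n) K) (Fn K n)).comp MvPolynomial.C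

/-- The variables `x₁,…,x_n` as elements of `K(x₁,…,x_n)`. -/
def xv (K : Type*) [Field K] (n : ℕ) (i : Fin n) : Fn K n :=
  algebraMap (MvPolynomial (Fin n) K) (Fn K n) (MvPolynomial.X i)

/-- The generalized Schur polynomial of the hook partition `(u+1, 1^v)`. -/
def genHook (a b : ℤ → K) (c : K →+* L) {m : ℕ} (y : Fin m → L) (u v : ℕ) : L :=
  genS a b c y (fun j : Fin m => if (j : ℕ) = 0 then u + 1 else if (j : ℕ) ≤ v then 1 else 0)

theorem phi_monic_natDegree (a b : ℤ → K) (k : ℕ) :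
    (phi a b k).Monic ∧ (phi a b k).natDegree = k := by
  induction k using Nat.strong_induction_on with
  | _ k ih =>
    match k with
    | 0 => simp [phi]
    | 1 => exact ⟨by simpa [phi] using monic_X_sub_C (a 0), by simp [phi]⟩
    | i + 2 =>
      obtain ⟨h1, d1⟩ := ih (i + 1) (by omega)
      obtain ⟨h0, d0⟩ := ih i (by omega)
      have hm : ((X - C (a (i + 1))) * phi a b (i + 1)).Monic := (monic_X_sub_C _).mul h1
      have hd : ((X - C (a (i + 1))) * phi a b (i + 1)).natDegree = i + 2 := by
        rw [(monic_X_sub_C _).natDegree_mul h1, natDegree_X_sub_C, d1]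
        ring
      have hlt : (C (b (i + 1)) * phi a b i).natDegree
          < ((X - C (a (i + 1))) * phi a b (i + 1)).natDegree := by
        have := natDegree_C_mul_le (b (i + 1)) (phi a b i)
        omega
      refine ⟨hm.sub_of_left (degree_lt_degree hlt), ?_⟩
      rw [phi, natDegree_sub_eq_left_of_natDegree_lt hlt, hd]

/-- The matrix with columns `φ_{m-1}, …, φ₀` evaluated at `y`. -/
def phiMatrix (a b : ℤ → K) (c : K →+* L) {m : ℕ} (y : Fin m → L) : Matrix (Fin m) (Fin m) L :=
  Matrix.of fun i j => (phi a b (m - 1 - (j : ℕ))).eval₂ c (y i)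

theorem det_phiMatrix (a b : ℤ → K) (c : K →+* L) {m : ℕ} (y : Fin m → L) :
    (phiMatrix a b c y).det = ∏ i : Fin m, ∏ j ∈ Finset.Ioi i, (y i - y j) := by
  have hV := Matrix.det_eval_matrixOfPolynomials_eq_det_vandermonde (y ∘ Fin.rev)
    (fun j : Fin m => (phi a b j).map c)
    (fun j => by rw [(phi_monic_natDegree a b j).1.natDegree_map, (phi_monic_natDegree a b j).2])
    (fun j => (phi_monic_natDegree a b j).1.map c)
  rw [Matrix.det_vandermonde] at hV
  rw [← Matrix.det_submatrix_equiv_self Fin.revPerm]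
  have hM : (phiMatrix a b c y).submatrix Fin.revPerm Fin.revPerm
      = Matrix.of fun i j : Fin m => ((phi a b j).map c).eval ((y ∘ Fin.rev) i) := by
    ext i j
    have : m - 1 - (m - (j.val + 1)) = j := by omega
    simp [phiMatrix, eval_map, this]
  rw [hM, ← hV, Finset.prod_sigma', Finset.prod_sigma']
  refine Finset.prod_bij' (fun p _ => ⟨p.2.rev, p.1.rev⟩) (fun p _ => ⟨p.2.rev, p.1.rev⟩)
    ?_ ?_ ?_ ?_ ?_ <;> simp

/-- The coordinates of `(φ_k(y_i))_i` in the basis given by the columns of `phiMatrix`. -/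
def phiCoord (a b : ℤ → K) (c : K →+* L) {m : ℕ} (y : Fin m → L) (k : ℕ) : Fin m → L :=
  (phiMatrix a b c y)⁻¹ *ᵥ fun i => (phi a b k).eval₂ c (y i)

theorem genS_eq_det_phiCoord (a b : ℤ → K) (c : K →+* L) {m : ℕ} (y : Fin m → L)
    (lam : Fin m → ℕ) :
    genS a b c y lam =
      Matrix.det (Matrix.of fun p j : Fin m =>
        phiCoord a b c y (lam j + (m - 1 - (j : ℕ))) p) := by
  have : (Matrix.of fun p j : Fin m => phiCoord a b c y (lam j + (m - 1 - (j : ℕ))) p)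
      = (phiMatrix a b c y)⁻¹ * Matrix.of fun i j : Fin m =>
        (phi a b (lam j + (m - 1 - (j : ℕ)))).eval₂ c (y i) := by
    ext p j
    simp [phiCoord, Matrix.mulVec, dotProduct, Matrix.mul_apply]
  rw [this, Matrix.det_mul, Matrix.det_nonsing_inv, Ring.inverse_eq_inv', det_phiMatrix, genS,
    div_eq_inv_mul]

theorem phiCoord_of_lt (a b : ℤ → K) (c : K →+* L) {m : ℕ} {y : Fin m → L}
    (hy : Function.Injective y) (p q : Fin m) :
    phiCoord a b c y (m - 1 - (q : ℕ)) p = if p = q then 1 else 0 := by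
  have hdet : IsUnit (phiMatrix a b c y).det := by
    rw [det_phiMatrix, isUnit_iff_ne_zero]
    refine Finset.prod_ne_zero_iff.mpr fun i _ => Finset.prod_ne_zero_iff.mpr fun j hj => ?_
    exact sub_ne_zero.mpr (hy.ne (Finset.mem_Ioi.mp hj).ne)
  have := congrFun (congrFun (Matrix.nonsing_inv_mul _ hdet) p) q
  rw [Matrix.one_apply] at this
  rw [← this]
  simp [phiCoord, phiMatrix, Matrix.mulVec, dotProduct, Matrix.mul_apply]

/-- The sign of a permutation that is decreasing on the first `r` indices and increasing on the
others. -/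
theorem sign_of_decreasing_increasing {m r : ℕ} (hr : r ≤ m) (σ : Equiv.Perm (Fin m))
    (hdec : ∀ i j : Fin m, i < j → (j : ℕ) < r → σ j < σ i)
    (hinc : ∀ i j : Fin m, r ≤ (i : ℕ) → i < j → σ i < σ j) :
    (Equiv.Perm.sign σ : ℤˣ) = ∏ i : Fin r, (-1) ^ (σ (Fin.castLE hr i) : ℕ) := by
  have hrow : ∀ i : Fin m, (∏ j ∈ Finset.Ioi i, if σ i < σ j then (1 : ℤˣ) else -1)
      = if (i : ℕ) < r then (-1) ^ (σ i : ℕ) else 1 := by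
    intro i
    split_ifs with hi
    · rw [Finset.prod_ite, Finset.prod_const_one, one_mul, Finset.prod_const]
      congr 1
      rw [← Fin.card_Iio (σ i)]
      refine Finset.card_bij (fun j _ => σ j) ?_ (fun _ _ _ _ h => σ.injective h) ?_
      · intro j hj
        simp only [Finset.mem_filter, Finset.mem_Ioi, not_lt, Finset.mem_Iio] at hj ⊢
        exact lt_of_le_of_ne hj.2 (σ.injective.ne hj.1.ne')
      · intro q hq
        refine ⟨σ.symm q, ?_, by simp⟩
        rw [Finset.mem_Iio] at hq
        simp only [Finset.mem_filter, Finset.mem_Ioi, Equiv.apply_symm_apply, not_lt]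
        refine ⟨?_, hq.le⟩
        by_contra! h
        rcases h.lt_or_eq with h | h
        · have := hdec _ _ h hi
          rw [Equiv.apply_symm_apply] at this
          exact lt_asymm this hq
        · simp [← h] at hq
    · exact Finset.prod_eq_one fun j hj =>
        if_pos (hinc i j (not_lt.mp hi) (Finset.mem_Ioi.mp hj))
  rw [Equiv.Perm.sign_eq_prod_prod_Ioi, Finset.prod_congr rfl fun i _ => hrow i,
    ← Finset.prod_filter]
  refine (Finset.prod_bij (fun i _ => Fin.castLE hr i) ?_ ?_ ?_ ?_).symm
  · simp
  · simp
  · intro i hi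
    exact ⟨⟨i, (Finset.mem_filter.mp hi).2⟩, by simp⟩
  · simp

theorem det_eq_det_signed_minor {R : Type*} [CommRing R] {m r : ℕ} (hr : r ≤ m)
    (A : Matrix (Fin m) (Fin m) R) (σ : Equiv.Perm (Fin m))
    (hdec : ∀ i j : Fin m, i < j → (j : ℕ) < r → σ j < σ i)
    (hinc : ∀ i j : Fin m, r ≤ (i : ℕ) → i < j → σ i < σ j)
    (hA : ∀ p j : Fin m, r ≤ (j : ℕ) → A p j = if p = σ j then 1 else 0) :
    A.det = Matrix.det (Matrix.of fun i j : Fin r =>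
      (-1) ^ (σ (Fin.castLE hr j) : ℕ) * A (σ (Fin.castLE hr j)) (Fin.castLE hr i)) := by
  have hperm : A.det = Equiv.Perm.sign σ * (A.submatrix σ id).det := by
    rw [Matrix.det_permute, ← mul_assoc, ← Int.cast_mul, ← Units.val_mul, Int.units_mul_self]
    simp
  rw [hperm, Matrix.twoBlockTriangular_det' (A.submatrix σ id) (fun i => (i : ℕ) < r)]
  · have hone : ((A.submatrix σ id).toSquareBlockProp fun i => ¬ (i : ℕ) < r) = 1 := by
      ext i j
      simp [Matrix.toSquareBlockProp_def, hA _ _ (not_lt.mp j.2), Matrix.one_apply,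
        Subtype.ext_iff]
    rw [hone, Matrix.det_one, mul_one, ← Matrix.det_submatrix_equiv_self (Fin.castLEquiv hr),
      ← Matrix.det_transpose, sign_of_decreasing_increasing hr σ hdec hinc]
    push_cast
    rw [← Matrix.det_mul_row]
    rfl
  · intro i hi j hj
    rw [Matrix.submatrix_apply, id, hA _ _ (not_lt.mp hj), if_neg]
    intro h
    rw [σ.injective h] at hi
    exact hj hi

theorem genS_eq_det_signed_phiCoord (a b : ℤ → K) (c : K →+* L) {m r : ℕ} (hr : r ≤ m)
    {y : Fin m → L} (hy : Function.Injective y) (lam : Fin m → ℕ) (σ : Equiv.Perm (Fin m))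
    (hdec : ∀ i j : Fin m, i < j → (j : ℕ) < r → σ j < σ i)
    (hinc : ∀ i j : Fin m, r ≤ (i : ℕ) → i < j → σ i < σ j)
    (hlam : ∀ j : Fin m, r ≤ (j : ℕ) → (j : ℕ) = σ j + lam j) :
    genS a b c y lam = Matrix.det (Matrix.of fun i j : Fin r =>
      (-1) ^ (σ (Fin.castLE hr j) : ℕ) *
        phiCoord a b c y (lam (Fin.castLE hr i) + (m - 1 - (i : ℕ))) (σ (Fin.castLE hr j))) := by
  rw [genS_eq_det_phiCoord, det_eq_det_signed_minor hr _ σ hdec hinc]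
  · rfl
  · intro p j hj
    have : lam j + (m - 1 - (j : ℕ)) = m - 1 - (σ j : ℕ) := by
      have := hlam j hj
      omega
    rw [Matrix.of_apply, this, phiCoord_of_lt a b c hy]

theorem genHook_eq_phiCoord (a b : ℤ → K) (c : K →+* L) {m : ℕ} {y : Fin m → L}
    (hy : Function.Injective y) (u : ℕ) (v : Fin m) :
    genHook a b c y u v = (-1) ^ (v : ℕ) * phiCoord a b c y (u + m) v := by
  have hm : 1 ≤ m := v.pos
  let f : Fin m → Fin m := fun j =>
    ⟨if (j : ℕ) = 0 then v else if (j : ℕ) ≤ v then j - 1 else j, by split_ifs <;> omega⟩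
  have hf : Function.Injective f := by
    intro i j h
    simp only [f, Fin.mk.injEq] at h
    ext
    split_ifs at h <;> omega
  let σ : Equiv.Perm (Fin m) := Equiv.ofBijective f (Finite.injective_iff_bijective.mp hf)
  have hσ : ∀ j, (σ j : ℕ) = if (j : ℕ) = 0 then (v : ℕ) else if (j : ℕ) ≤ v then j - 1 else j :=
    fun j => rfl
  have hσ0 : σ (Fin.castLE hm 0) = v := Fin.ext (by simp [hσ])
  rw [genHook, genS_eq_det_signed_phiCoord a b c hm hy _ σ, Matrix.det_fin_one, Matrix.of_apply,
    hσ0]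
  · have : u + 1 + (m - 1 - 0) = u + m := by omega
    simp [← this]
  · intro i j hij hj
    rw [Fin.lt_def] at hij
    omega
  · intro i j hi hij
    rw [Fin.lt_def] at hij ⊢
    rw [hσ, hσ]
    split_ifs <;> omega
  · intro j hj
    rw [hσ]
    split_ifs <;> omega

theorem lt_card_filter_iff {m : ℕ} (p : Fin m → Prop) [DecidablePred p]
    (hp : ∀ i j, i ≤ j → p j → p i) (k : Fin m) :
    (k : ℕ) < (Finset.univ.filter p).card ↔ p k := by
  constructor
  · intro h
    by_contra hk
    have : Finset.univ.filter p ⊆ Finset.Iio k := fun j hj => by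
      rw [Finset.mem_Iio]
      by_contra! hkj
      exact hk (hp k j hkj (Finset.mem_filter.mp hj).2)
    have := Finset.card_le_card this
    rw [Fin.card_Iio] at this
    omega
  · intro h
    have : Finset.Iic k ⊆ Finset.univ.filter p := fun j hj => by
      simpa using hp j k (Finset.mem_Iic.mp hj) h
    have := Finset.card_le_card this
    rw [Fin.card_Iic] at this
    omega

/-- The permutation listing the leg lengths of the diagonal boxes of `λ`, followed by the
remaining indices `j - λ_j`. -/
theorem exists_perm_legs {n r : ℕ} {lam : Fin n → ℕ} (hanti : Antitone lam) {conj : ℕ → ℕ}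
    (hr : ∀ k : Fin n, (k : ℕ) < r ↔ (k : ℕ) + 1 ≤ lam k)
    (hconj : ∀ (i : ℕ) (k : Fin n), (k : ℕ) < conj i ↔ i + 1 ≤ lam k)
    (hle : ∀ i, conj i ≤ n) :
    ∃ σ : Equiv.Perm (Fin n), ∀ j : Fin n,
      ((j : ℕ) < r → (σ j : ℕ) + (j + 1) = conj j) ∧ (r ≤ (j : ℕ) → (j : ℕ) = σ j + lam j) := by
  have hlt : ∀ j : Fin n, (j : ℕ) < r → (j : ℕ) < conj j := fun j hj =>
    (hconj j j).mpr ((hr j).mp hj)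
  have hge : ∀ j : Fin n, ¬ (j : ℕ) < r → lam j ≤ j := fun j hj => by
    rw [hr] at hj
    omega
  let f : Fin n → Fin n := fun j =>
    ⟨if (j : ℕ) < r then conj j - (j + 1) else j - lam j, by
      have := hle j
      split_ifs <;> omega⟩
  have hmono : ∀ i j : Fin n, i < j → lam j ≤ lam i := fun i j h => hanti h.le
  have hf : Function.Injective f := by
    have key : ∀ i j : Fin n, i < j → f i ≠ f j := by
      intro i j hij h
      simp only [f, Fin.mk.injEq] at h
      have hl := hmono i j hij
      rw [Fin.lt_def] at hij
      have hi := hlt i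
      have hj := hlt j
      have hi' := hge i
      have hj' := hge j
      have hc := hconj i j
      split_ifs at h with h1 h2 h2
      · have hcc : conj j ≤ conj i := by
          by_contra! hcon
          let k : Fin n := ⟨conj i, hcon.trans_le (hle j)⟩
          have h3 := (hconj j k).mp hcon
          have h4 := mt (hconj i k).mpr (lt_irrefl (conj i))
          omega
        have := hj h2
        omega
      · have := hi h1
        have := hj' h2
        by_cases hc' : (j : ℕ) < conj i
        · have := hc.mp hc'
          omega
        · have := mt hc.mpr hc'
          omega
      · omega
      · have := hi' h1
        have := hj' h2
        omega
    intro i j h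
    rcases lt_trichotomy i j with hij | hij | hij
    · exact absurd h (key i j hij)
    · exact hij
    · exact absurd h.symm (key j i hij)
  refine ⟨Equiv.ofBijective f (Finite.injective_iff_bijective.mp hf), fun j => ⟨fun hj => ?_,
    fun hj => ?_⟩⟩
  · have := hlt j hj
    simp only [Equiv.ofBijective_apply, f, if_pos hj]
    omega
  · have := hge j (not_lt.mpr hj)
    simp only [Equiv.ofBijective_apply, f, if_neg (not_lt.mpr hj)]
    omega

theorem xv_injective (K : Type*) [Field K] (n : ℕ) : Function.Injective (xv K n) :=
  (IsFractionRing.injective (MvPolynomial (Fin n) K) (Fn K n)).comp MvPolynomial.X_injective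

/-- **Giambelli formula for generalized Schur polynomials.**
For a partition `λ` with at most `n` parts, with `r = #{i : λ_i ≥ i}` diagonal boxes and
conjugate `λ'`, one has `S_λ(x|a,b) = det( S_{(λ_i - i | λ'_j - j)} )_{1 ≤ i,j ≤ r}`. -/
theorem generalized_giambelli (K : Type*) [Field K] (a b : ℤ → K) (n : ℕ) (hn : 1 ≤ n)
    (lam : Fin n → ℕ) (hanti : Antitone lam) :
    genS a b (cK K n) (xv K n) lam =
      Matrix.det (Matrix.of fun i j :
          Fin ((Finset.univ.filter fun k : Fin n => (k : ℕ) + 1 ≤ lam k).card) =>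
        genHook a b (cK K n) (xv K n)
          (lam (Fin.castLE (le_trans (Finset.card_filter_le _ _) (by simp)) i) - ((i : ℕ) + 1))
          ((Finset.univ.filter fun k : Fin n => (j : ℕ) + 1 ≤ lam k).card - ((j : ℕ) + 1))) := by
  have hconj : ∀ (i : ℕ) (k : Fin n),
      (k : ℕ) < (Finset.univ.filter fun k : Fin n => i + 1 ≤ lam k).card ↔ i + 1 ≤ lam k :=
    fun i k => lt_card_filter_iff _ (fun _ _ hij h => h.trans (hanti hij)) k
  have hdiag : ∀ k : Fin n,
      (k : ℕ) < (Finset.univ.filter fun k : Fin n => (k : ℕ) + 1 ≤ lam k).card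
        ↔ (k : ℕ) + 1 ≤ lam k :=
    lt_card_filter_iff _ fun i j hij h =>
      (Nat.succ_le_succ (Fin.le_def.mp hij)).trans (h.trans (hanti hij))
  have hle : ∀ i : ℕ, (Finset.univ.filter fun k : Fin n => i + 1 ≤ lam k).card ≤ n := fun i =>
    (Finset.card_filter_le _ _).trans (by simp)
  have hr : (Finset.univ.filter fun k : Fin n => (k : ℕ) + 1 ≤ lam k).card ≤ n :=
    (Finset.card_filter_le _ _).trans (by simp)
  obtain ⟨σ, hσ⟩ := exists_perm_legs hanti hdiag hconj hle
  have hdec : ∀ i j : Fin n, i < j →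
      (j : ℕ) < (Finset.univ.filter fun k : Fin n => (k : ℕ) + 1 ≤ lam k).card → σ j < σ i := by
    intro i j hij hj
    have hi := (hσ i).1 (lt_trans hij hj)
    have hj := (hσ j).1 hj
    have := Finset.card_le_card (Finset.monotone_filter_right (Finset.univ : Finset (Fin n))
      (p := fun k => (j : ℕ) + 1 ≤ lam k) (q := fun k => (i : ℕ) + 1 ≤ lam k)
      fun k h => by have := Fin.lt_def.mp hij; omega)
    rw [Fin.lt_def] at hij ⊢
    omega
  have hinc : ∀ i j : Fin n,
      (Finset.univ.filter fun k : Fin n => (k : ℕ) + 1 ≤ lam k).card ≤ (i : ℕ) →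
        i < j → σ i < σ j := by
    intro i j hi hij
    have h1 := (hσ i).2 hi
    have h2 := (hσ j).2 (hi.trans (Fin.le_def.mp hij.le))
    have := hanti hij.le
    rw [Fin.lt_def] at hij ⊢
    omega
  rw [genS_eq_det_signed_phiCoord a b (cK K n) hr (xv_injective K n) lam σ hdec hinc
    fun j => (hσ j).2]
  congr 1
  ext i j
  simp only [Matrix.of_apply]
  have hj := (hσ (Fin.castLE hr j)).1 j.2
  have hi := (hdiag (Fin.castLE hr i)).mp i.2
  simp only [Fin.val_castLE] at hi hj
  have hv : (Finset.univ.filter fun k : Fin n => (j : ℕ) + 1 ≤ lam k).card - ((j : ℕ) + 1)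
      = σ (Fin.castLE hr j) := by omega
  rw [hv, genHook_eq_phiCoord a b (cK K n) (xv_injective K n)]
  congr 2
  have := i.2
  omega
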